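/- Every 4 × 4 matrix M : Fin 4 → Fin 4 → ℕ satisfying the warping-matrix rules for c = 2 is equivalent, up to a permutation of rows, a cyclic permutation of columns, and possibly reversing the cyclic order of columns, to the matrix with rows (0, 1, 2, 1), (1, 0, 1, 0), (1, 2, 1, 2), (2, 1, 0, 1). -/

import Mathlib

namespace Warping

/-- The cyclic successor of an index. -/
def next {n : ℕ} (b : Fin n) : Fin n :=
  ⟨((b : ℕ) + 1) % n, Nat.mod_lt _ (Nat.lt_of_le_of_lt (Nat.zero_le _) b.isLt)⟩

/-- Cyclic shift of the columns by `t`. -/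
def colShift (c : ℕ) (t : ℕ) (j : Fin (2*c)) : Fin (2*c) :=
  ⟨((j : ℕ) + t) % (2*c), Nat.mod_lt _ (Nat.lt_of_le_of_lt (Nat.zero_le _) j.isLt)⟩

/-- Reversal of the cyclic order of the columns (composed with a cyclic shift by `t`). -/
def colRev (c : ℕ) (t : ℕ) (j : Fin (2*c)) : Fin (2*c) :=
  ⟨(t + 2*c - (j : ℕ)) % (2*c), Nat.mod_lt _ (Nat.lt_of_le_of_lt (Nat.zero_le _) j.isLt)⟩

/-- A row of one of the alternating forms `(k, k+1, k, k+1, …, k+1)` or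
`(l, l-1, l, l-1, …, l-1)`. -/
def AltRow (c : ℕ) (r : Fin (2*c) → ℕ) : Prop :=
  (∃ k : ℕ, ∀ j : Fin (2*c), (r j : ℤ) = k + (j : ℕ) % 2) ∨
  (∃ l : ℕ, ∀ j : Fin (2*c), (r j : ℤ) = l - (j : ℕ) % 2)

/-- The warping-matrix rules (i)–(iv) for a `2^c × 2c` matrix:
(i) cyclically consecutive entries of every row differ by exactly one;
(ii) in each column the value `n` appears exactly `c.choose n` times;
(iii) there is a unique partition of the `2^c` rows into `2^(c-1)` disjoint pairs such that
the two rows of each pair sum entrywise to the constant row `(c, c, …, c)`;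
(iv) there are exactly two rows of the alternating forms `(k, k+1, k, k+1, …)` and
`(l, l-1, l, l-1, …)`, and for these `k + l = c`. -/
def WarpingRules (c : ℕ) (M : Fin (2^c) → Fin (2*c) → ℕ) : Prop :=
  (∀ i j, |(M i (next j) : ℤ) - (M i j : ℤ)| = 1) ∧
  (∀ j : Fin (2*c), ∀ n : ℕ, n ≤ c →
      (Finset.univ.filter (fun i => M i j = n)).card = Nat.choose c n) ∧
  (∃! P : Finset (Finset (Fin (2^c))),
      P.card = 2^(c-1) ∧ (∀ p ∈ P, p.card = 2) ∧
      (∀ i : Fin (2^c), ∃! p, p ∈ P ∧ i ∈ p) ∧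
      (∀ p ∈ P, ∀ i ∈ p, ∀ i' ∈ p, i ≠ i' → ∀ j, M i j + M i' j = c)) ∧
  (∃ i₀ i₁ : Fin (2^c), ∃ k l : ℕ, i₀ ≠ i₁ ∧ k + l = c ∧
      (∀ j : Fin (2*c), (M i₀ j : ℤ) = k + (j : ℕ) % 2) ∧
      (∀ j : Fin (2*c), (M i₁ j : ℤ) = l - (j : ℕ) % 2) ∧
      (∀ i, AltRow c (M i) → i = i₀ ∨ i = i₁))

/-- Equivalence of `2^c × 2c` matrices up to a permutation of rows, a cyclic permutation of
columns, and possibly reversing the cyclic order of the columns. -/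
def MatEquiv (c : ℕ) (M N : Fin (2^c) → Fin (2*c) → ℕ) : Prop :=
  ∃ σ : Equiv.Perm (Fin (2^c)), ∃ t : ℕ,
    (∀ i j, M i j = N (σ i) (colShift c t j)) ∨ (∀ i j, M i j = N (σ i) (colRev c t j))


theorem exists_perm_aux : ∀ a b : Fin 4, a ≠ b → ∃ e : Equiv.Perm (Fin 4), e 0 = a ∧ e 1 = b := by
  decide

theorem col_aux (a b x y : ℕ)
    (h : ∀ n : ℕ, n ≤ 2 → ((if a = n then 1 else 0) + (if b = n then 1 else 0) +
      (if x = n then 1 else 0) + (if y = n then 1 else 0)) = Nat.choose 2 n) :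
    a ≤ 2 ∧ b ≤ 2 ∧ (a = 1 → b = 1 → (x = 0 ∧ y = 2 ∨ x = 2 ∧ y = 0)) ∧
    (a = 0 → b = 2 → x = 1 ∧ y = 1) ∧ (a = 2 → b = 0 → x = 1 ∧ y = 1) := by
  have h0 := h 0 (by norm_num)
  have h1 := h 1 (by norm_num)
  have h2 := h 2 (by norm_num)
  simp only [Nat.choose_zero_right, Nat.choose_one_right, Nat.choose_self] at h0 h1 h2
  refine ⟨?_, ?_, ?_, ?_, ?_⟩ <;> grind

theorem fin_equiv (M : Fin 4 → Fin 4 → ℕ) (e : Equiv.Perm (Fin 4)) (f : Fin 4 → Fin 4)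
    (hf : Function.Bijective f) (t : ℕ)
    (h : ∀ i j : Fin 4, M (e i) j =
      (![![0,1,2,1], ![1,0,1,0], ![1,2,1,2], ![2,1,0,1]] : Fin 4 → Fin 4 → ℕ) (f i)
        (colShift 2 t j)) :
    MatEquiv 2 M ![![0,1,2,1], ![1,0,1,0], ![1,2,1,2], ![2,1,0,1]] := by
  refine ⟨e.symm.trans (Equiv.ofBijective f hf), t, Or.inl ?_⟩
  intro i j
  have := h (e.symm i) j
  rw [Equiv.apply_symm_apply] at this
  exact this

theorem all_aux (A B : Fin 4 → Fin 4 → ℕ)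
    (a0 : A 0 0 = B 0 0) (a1 : A 0 1 = B 0 1) (a2 : A 0 2 = B 0 2) (a3 : A 0 3 = B 0 3)
    (b0 : A 1 0 = B 1 0) (b1 : A 1 1 = B 1 1) (b2 : A 1 2 = B 1 2) (b3 : A 1 3 = B 1 3)
    (c0 : A 2 0 = B 2 0) (c1 : A 2 1 = B 2 1) (c2 : A 2 2 = B 2 2) (c3 : A 2 3 = B 2 3)
    (d0 : A 3 0 = B 3 0) (d1 : A 3 1 = B 3 1) (d2 : A 3 2 = B 3 2) (d3 : A 3 3 = B 3 3) :
    ∀ i j, A i j = B i j := by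
  intro i j
  fin_cases i <;> fin_cases j <;> assumption

/-- Every `4 × 4` matrix satisfying the warping-matrix rules for `c = 2` is equivalent to
the matrix with rows `(0,1,2,1)`, `(1,0,1,0)`, `(1,2,1,2)`, `(2,1,0,1)`. -/
theorem warpingRules_two (M : Fin (2^2) → Fin (2*2) → ℕ) (hM : WarpingRules 2 M) :
    MatEquiv 2 M ![![0,1,2,1], ![1,0,1,0], ![1,2,1,2], ![2,1,0,1]] := by
  obtain ⟨-, h2, -, i₀, i₁, k, l, hne, hkl, hr0, hr1, halt⟩ := hM
  obtain ⟨e, rfl, rfl⟩ := exists_perm_aux i₀ i₁ hne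
  have hc : ∀ j : Fin 4, _ := fun j => col_aux (M (e 0) j) (M (e 1) j) (M (e 2) j) (M (e 3) j) (by
    intro n hn
    rw [← h2 j n hn, Finset.card_filter]
    have := Equiv.sum_comp e (fun i : Fin 4 => if M i j = n then 1 else 0)
    rw [Fin.sum_univ_four] at this
    exact this)
  have n2 : ¬ AltRow 2 (M (e 2)) := fun h => by
    rcases halt _ h with h | h <;> exact absurd (e.injective h) (by decide)
  have a0 := hr0 (0 : Fin 4)
  have a1 := hr0 (1 : Fin 4)
  have a2 := hr0 (2 : Fin 4)
  have a3 := hr0 (3 : Fin 4)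
  have b0 := hr1 (0 : Fin 4)
  have b1 := hr1 (1 : Fin 4)
  have b2 := hr1 (2 : Fin 4)
  have b3 := hr1 (3 : Fin 4)
  have c0 := hc 0
  have c1 := hc 1
  have c2 := hc 2
  have c3 := hc 3
  clear hr0 hr1 hc halt h2
  have v0 : ((0 : Fin 4) : ℕ) = 0 := rfl
  have v1 : ((1 : Fin 4) : ℕ) = 1 := rfl
  have v2 : ((2 : Fin 4) : ℕ) = 2 := rfl
  have v3 : ((3 : Fin 4) : ℕ) = 3 := rfl
  simp only [v0, v1, v2, v3] at a0 a1 a2 a3 b0 b1 b2 b3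
  norm_num at a0 a1 a2 a3 b0 b1 b2 b3
  have key : ∀ x : ℕ, M (e 2) (0 : Fin 4) = x → M (e 2) (1 : Fin 4) = x + 1 →
      M (e 2) (2 : Fin 4) = x → M (e 2) (3 : Fin 4) = x + 1 → False := by
    intro x p0 p1 p2 p3
    refine n2 (Or.inl ⟨x, fun j => ?_⟩)
    change Fin 4 at j
    fin_cases j
    · change ((M (e 2) (0 : Fin 4) : ℕ) : ℤ) = _; rw [p0]; simp
    · change ((M (e 2) (1 : Fin 4) : ℕ) : ℤ) = _; rw [p1]; simp
    · change ((M (e 2) (2 : Fin 4) : ℕ) : ℤ) = _; rw [p2]; simp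
    · change ((M (e 2) (3 : Fin 4) : ℕ) : ℤ) = _; rw [p3]; simp
  have key' : ∀ x : ℕ, M (e 2) (0 : Fin 4) = x + 1 → M (e 2) (1 : Fin 4) = x →
      M (e 2) (2 : Fin 4) = x + 1 → M (e 2) (3 : Fin 4) = x → False := by
    intro x p0 p1 p2 p3
    refine n2 (Or.inr ⟨x + 1, fun j => ?_⟩)
    change Fin 4 at j
    fin_cases j
    · change ((M (e 2) (0 : Fin 4) : ℕ) : ℤ) = _; rw [p0]; simp
    · change ((M (e 2) (1 : Fin 4) : ℕ) : ℤ) = _; rw [p1]; simp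
    · change ((M (e 2) (2 : Fin 4) : ℕ) : ℤ) = _; rw [p2]; simp
    · change ((M (e 2) (3 : Fin 4) : ℕ) : ℤ) = _; rw [p3]; simp
  have k0 := key 0
  have k1 := key 1
  have k2 := key' 0
  have k3 := key' 1
  clear key key' n2
  obtain ⟨-, -, c01, c02, c03⟩ := c0
  obtain ⟨c1a, -, c11, c12, c13⟩ := c1
  obtain ⟨-, -, c21, c22, c23⟩ := c2
  obtain ⟨-, -, c31, c32, c33⟩ := c3
  have hk : k = 0 ∨ k = 1 := by clear * - a1 c1a; omega
  rcases hk with rfl | rfl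
  · obtain rfl : l = 2 := by clear * - hkl; omega
    replace a0 : M (e 0) (0 : Fin 4) = 0 := by clear * - a0; omega
    replace a1 : M (e 0) (1 : Fin 4) = 1 := by clear * - a1; omega
    replace a2 : M (e 0) (2 : Fin 4) = 0 := by clear * - a2; omega
    replace a3 : M (e 0) (3 : Fin 4) = 1 := by clear * - a3; omega
    replace b0 : M (e 1) (0 : Fin 4) = 2 := by clear * - b0; omega
    replace b1 : M (e 1) (1 : Fin 4) = 1 := by clear * - b1; omega
    replace b2 : M (e 1) (2 : Fin 4) = 2 := by clear * - b2; omega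
    replace b3 : M (e 1) (3 : Fin 4) = 1 := by clear * - b3; omega
    obtain ⟨d0, f0⟩ := c02 a0 b0
    obtain ⟨d2, f2⟩ := c22 a2 b2
    rcases c11 a1 b1 with ⟨d1, f1⟩ | ⟨d1, f1⟩ <;> rcases c31 a3 b3 with ⟨d3, f3⟩ | ⟨d3, f3⟩
    · exact (k2 d0 d1 d2 d3).elim
    · refine fin_equiv M e ![1, 2, 3, 0] (by decide) 1 ?_
      exact all_aux (fun i j => M (e i) j) (fun i j => _) a0 a1 a2 a3 b0 b1 b2 b3 d0 d1 d2 d3 f0 f1 f2 f3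
    · refine fin_equiv M e ![1, 2, 0, 3] (by decide) 1 ?_
      exact all_aux (fun i j => M (e i) j) (fun i j => _) a0 a1 a2 a3 b0 b1 b2 b3 d0 d1 d2 d3 f0 f1 f2 f3
    · exact (k1 d0 d1 d2 d3).elim
  · obtain rfl : l = 1 := by clear * - hkl; omega
    replace a0 : M (e 0) (0 : Fin 4) = 1 := by clear * - a0; omega
    replace a1 : M (e 0) (1 : Fin 4) = 2 := by clear * - a1; omega
    replace a2 : M (e 0) (2 : Fin 4) = 1 := by clear * - a2; omega
    replace a3 : M (e 0) (3 : Fin 4) = 2 := by clear * - a3; omega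
    replace b0 : M (e 1) (0 : Fin 4) = 1 := by clear * - b0; omega
    replace b1 : M (e 1) (1 : Fin 4) = 0 := by clear * - b1; omega
    replace b2 : M (e 1) (2 : Fin 4) = 1 := by clear * - b2; omega
    replace b3 : M (e 1) (3 : Fin 4) = 0 := by clear * - b3; omega
    obtain ⟨d1, f1⟩ := c13 a1 b1
    obtain ⟨d3, f3⟩ := c33 a3 b3
    rcases c01 a0 b0 with ⟨d0, f0⟩ | ⟨d0, f0⟩ <;> rcases c21 a2 b2 with ⟨d2, f2⟩ | ⟨d2, f2⟩
    · exact (k0 d0 d1 d2 d3).elim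
    · refine fin_equiv M e ![2, 1, 0, 3] (by decide) 0 ?_
      exact all_aux (fun i j => M (e i) j) (fun i j => _) a0 a1 a2 a3 b0 b1 b2 b3 d0 d1 d2 d3 f0 f1 f2 f3
    · refine fin_equiv M e ![2, 1, 3, 0] (by decide) 0 ?_
      exact all_aux (fun i j => M (e i) j) (fun i j => _) a0 a1 a2 a3 b0 b1 b2 b3 d0 d1 d2 d3 f0 f1 f2 f3
    · exact (k3 d0 d1 d2 d3).elim

end Warping
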